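/- Let R be a regular n-polytope with base flag Φ, automorphism group Γ(R) = ⟨ρ_0, ..., ρ_{n-1}⟩ (where ρ_j is the unique automorphism mapping Φ to the j-adjacent flag Φ^j), and monodromy group Mon(R) = ⟨g_0, ..., g_{n-1}⟩. Then there is a group isomorphism Γ(R) ≅ Mon(R) mapping ρ_j to g_j for each j. -/

import Mathlib

/-- Two flags are `j`-adjacent (w.r.t. the rank function `rk`): they are distinct
and agree in every face whose rank is different from `j`. -/
def IsPolytopeAdj {P : Type*} [PartialOrder P] (rk : P → ℤ) (j : ℤ) (c d : Flag P) : Prop :=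
  c ≠ d ∧ ∀ z : P, rk z ≠ j → (z ∈ c ↔ z ∈ d)

/-- `P`, with strictly monotone rank function `rk` onto `{-1, 0, ..., n}`, is an
abstract polytope of rank `n`: it has a least and a greatest face, satisfies the
diamond condition and is strongly flag-connected. -/
structure IsAbstractPolytope {P : Type*} [PartialOrder P] (n : ℤ) (rk : P → ℤ) : Prop where
  neg_one_le : -1 ≤ n
  strictMono : ∀ {F G : P}, F < G → rk F < rk G
  rank_range : Set.range rk = Set.Icc (-1 : ℤ) n
  exists_bot : ∃ F₀ : P, ∀ F, F₀ ≤ F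
  exists_top : ∃ Fn : P, ∀ F, F ≤ Fn
  diamond : ∀ F G : P, F < G → rk G = rk F + 2 →
    ∃ H₁ H₂ : P, H₁ ≠ H₂ ∧ ∀ H : P, (F < H ∧ H < G) ↔ (H = H₁ ∨ H = H₂)
  strongly_connected : ∀ F G : P, F ≤ G →
    ∀ c d : Flag ↥(Set.Icc F G),
      Relation.ReflTransGen
        (fun c' d' => ∃ j : ℤ, IsPolytopeAdj (fun H => rk H.val) j c' d') c d

/-- A covering of polytopes: an order- and rank-preserving map sending flags to
flags and sending `j`-adjacent pairs of flags to `j`-adjacent pairs of flags. -/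
def IsPolytopeCovering {R Q : Type*} [PartialOrder R] [PartialOrder Q]
    (rkR : R → ℤ) (rkQ : Q → ℤ) (η : R → Q) : Prop :=
  Monotone η ∧ (∀ F : R, rkQ (η F) = rkR F) ∧
  (∀ c : Flag R, ∃ c' : Flag Q, η '' ↑c = ↑c') ∧
  (∀ (j : ℤ) (c d : Flag R) (c' d' : Flag Q), η '' ↑c = ↑c' → η '' ↑d = ↑d' →
    IsPolytopeAdj rkR j c d → IsPolytopeAdj rkQ j c' d')

/-- A polytope is regular if its automorphism group (order-preserving bijections)
acts transitively on the set of flags. -/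
def IsRegularPolytope {P : Type*} [PartialOrder P] : Prop :=
  ∀ c d : Flag P, ∃ e : P ≃o P, e '' (↑c : Set P) = (↑d : Set P)

/-- An abstract polytope of rank `n`, bundled with its carrier. -/
structure BundledPolytope (n : ℤ) where
  carrier : Type
  [po : PartialOrder carrier]
  rk : carrier → ℤ
  isPolytope : IsAbstractPolytope n rk

attribute [instance] BundledPolytope.po

/-!
The monodromy generators commute with automorphisms, because automorphisms preserve rank and hence
`j`-adjacency. In a regular polytope the automorphism group acts simply transitively on the flags,
so once a base flag identifies flags with automorphisms, the permutations of the flags commuting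
with all automorphisms are the right translations. The monodromy group is therefore a group of
right translations; being transitive, since the flag graph is connected, it consists of all of them.
-/

section SimplyTransitive

variable {G X : Type*} [Group G] [MulAction G X] {x : X}

/-- The group of permutations of `X` commuting with the action of `G`, as the centralizer of the
image of `G` in the symmetric group. -/
def actionCentralizer (G X : Type*) [Group G] [MulAction G X] : Subgroup (Equiv.Perm X) :=
  Subgroup.centralizer (MulAction.toPermHom G X).range

lemma mem_actionCentralizer_iff {f : Equiv.Perm X} :
    f ∈ actionCentralizer G X ↔ ∀ (a : G) (y : X), f (a • y) = a • f y := by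
  rw [actionCentralizer, Subgroup.mem_centralizer_iff, MonoidHom.coe_range, Set.forall_mem_range]
  simp only [Equiv.ext_iff, Equiv.Perm.mul_apply, MulAction.toPermHom_apply,
    MulAction.toPerm_apply, eq_comm]

lemma eq_of_mem_actionCentralizer_of_apply_eq (hx : Function.Surjective fun a : G => a • x)
    {f f' : Equiv.Perm X} (hf : f ∈ actionCentralizer G X) (hf' : f' ∈ actionCentralizer G X)
    (h : f x = f' x) : f = f' := by
  rw [mem_actionCentralizer_iff] at hf hf'
  refine Equiv.ext fun y => ?_
  obtain ⟨a, rfl⟩ := hx y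
  simp only [hf, hf', h]

lemma eq_actionCentralizer_of_le (hx : Function.Surjective fun a : G => a • x)
    {H : Subgroup (Equiv.Perm X)} (hH : H ≤ actionCentralizer G X)
    (htrans : ∀ y, ∃ w ∈ H, w x = y) : H = actionCentralizer G X := by
  refine hH.antisymm fun f hf => ?_
  obtain ⟨w, hw, hwx⟩ := htrans (f x)
  exact eq_of_mem_actionCentralizer_of_apply_eq hx (hH hw) hf hwx ▸ hw

/-- The right regular representation of `G`, transported to a set `X` on which `G` acts simply
transitively by identifying `b : G` with `b • x`. The inverse in `b • x ↦ (b * a⁻¹) • x` makes it a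
homomorphism rather than an antihomomorphism. -/
noncomputable def rightTranslationHom (hx : Function.Bijective fun a : G => a • x) :
    G →* Equiv.Perm X :=
  (Equiv.ofBijective _ hx).permCongrHom.toMonoidHom.comp
    ((MulAction.toPermHom Gᵐᵒᵖ G).comp (MulEquiv.inv' G).toMonoidHom)

lemma rightTranslationHom_apply_smul (hx : Function.Bijective fun a : G => a • x) (a b : G) :
    rightTranslationHom hx a (b • x) = (b * a⁻¹) • x := by
  have hb : (Equiv.ofBijective _ hx).symm (b • x) = b := Equiv.ofBijective_symm_apply_apply _ hx b
  simp [rightTranslationHom, Equiv.permCongr_apply, hb]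

lemma rightTranslationHom_apply_self (hx : Function.Bijective fun a : G => a • x) (a : G) :
    rightTranslationHom hx a x = a⁻¹ • x := by
  simpa using rightTranslationHom_apply_smul hx a 1

lemma rightTranslationHom_injective (hx : Function.Bijective fun a : G => a • x) :
    Function.Injective (rightTranslationHom hx) := fun a b hab => by
  have h : a⁻¹ • x = b⁻¹ • x := by
    rw [← rightTranslationHom_apply_self hx, hab, rightTranslationHom_apply_self]
  exact inv_injective (hx.injective h)

lemma rightTranslationHom_mem_actionCentralizer (hx : Function.Bijective fun a : G => a • x)
    (a : G) : rightTranslationHom hx a ∈ actionCentralizer G X := by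
  rw [mem_actionCentralizer_iff]
  intro b y
  obtain ⟨c, rfl⟩ := hx.surjective y
  simp only [← mul_smul, rightTranslationHom_apply_smul, mul_assoc]

lemma rightTranslationHom_eq_inv (hx : Function.Bijective fun a : G => a • x) {f : Equiv.Perm X}
    (hf : f ∈ actionCentralizer G X) {a : G} (ha : a • x = f x) :
    rightTranslationHom hx a = f⁻¹ := by
  refine eq_of_mem_actionCentralizer_of_apply_eq hx.surjective
    (rightTranslationHom_mem_actionCentralizer hx a) (inv_mem hf) ?_
  rw [rightTranslationHom_apply_self, Equiv.Perm.eq_inv_iff_eq,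
    mem_actionCentralizer_iff.1 hf, ← ha, inv_smul_smul]

lemma range_rightTranslationHom (hx : Function.Bijective fun a : G => a • x) :
    (rightTranslationHom hx).range = actionCentralizer G X := by
  refine eq_actionCentralizer_of_le hx.surjective ?_ fun y => ?_
  · rintro _ ⟨a, rfl⟩
    exact rightTranslationHom_mem_actionCentralizer hx a
  · obtain ⟨a, rfl⟩ := hx.surjective y
    exact ⟨_, ⟨a⁻¹, rfl⟩, by rw [rightTranslationHom_apply_self, inv_inv]⟩

end SimplyTransitive

section Flag

variable {P Q : Type*}

lemma flag_eq_of_le [LE P] {c d : Flag P} (h : c ≤ d) : c = d :=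
  Flag.ext (c.maxChain.2 d.chain_le h)

lemma mem_flag_map_iff [Preorder P] [Preorder Q] {e : P ≃o Q} {c : Flag P} {z : Q} :
    z ∈ Flag.map e c ↔ e.symm z ∈ c := by
  rw [← Flag.mem_coe_iff, Flag.coe_map, e.image_eq_preimage_symm, Set.mem_preimage,
    Flag.mem_coe_iff]

variable [PartialOrder P] [Preorder Q] {f : P → Q} {c : Flag P} {x y : P}

lemma eq_of_apply_eq_of_mem_flag (hf : StrictMono f) (hx : x ∈ c) (hy : y ∈ c)
    (h : f x = f y) : x = y := by
  by_contra hne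
  rcases c.chain_lt hx hy hne with hxy | hyx
  · exact (hf hxy).ne h
  · exact (hf hyx).ne' h

lemma lt_of_apply_lt_of_mem_flag (hf : StrictMono f) (hx : x ∈ c) (hy : y ∈ c)
    (h : f x < f y) : x < y :=
  ((c.le_or_le hx hy).resolve_right fun hyx => (hf.monotone hyx).not_gt h).lt_of_ne
    fun hxy => h.ne (congrArg f hxy)

end Flag

namespace IsPolytopeAdj

variable {P Q : Type*} [PartialOrder P] [PartialOrder Q] {rk : P → ℤ} {j : ℤ} {c d : Flag P}

lemma symm (h : IsPolytopeAdj rk j c d) : IsPolytopeAdj rk j d c :=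
  ⟨h.1.symm, fun z hz => (h.2 z hz).symm⟩

lemma exists_mem_rank_eq (h : IsPolytopeAdj rk j c d) : ∃ z ∈ c, rk z = j := by
  by_contra! hc
  exact h.1 (flag_eq_of_le fun z hz => (h.2 z (hc z hz)).1 hz)

lemma exists_mem_rank_eq_iff (h : IsPolytopeAdj rk j c d) (k : ℤ) :
    (∃ z ∈ c, rk z = k) ↔ ∃ z ∈ d, rk z = k := by
  by_cases hk : k = j
  · subst hk
    exact iff_of_true h.exists_mem_rank_eq h.symm.exists_mem_rank_eq
  · exact exists_congr fun z => and_congr_left fun hz => h.2 z (hz ▸ hk)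

lemma notMem_of_rank_eq (h : IsPolytopeAdj rk j c d) (hrk : StrictMono rk) {x : P} (hx : x ∈ c)
    (hxj : rk x = j) : x ∉ d := by
  refine fun hxd => h.1 (flag_eq_of_le fun z hz => ?_)
  by_cases hzj : rk z = j
  · rwa [eq_of_apply_eq_of_mem_flag hrk hz hx (hzj.trans hxj.symm)]
  · exact (h.2 z hzj).1 hz

lemma map (h : IsPolytopeAdj rk j c d) {rkQ : Q → ℤ} (e : P ≃o Q)
    (he : ∀ z, rk (e.symm z) = rkQ z) :
    IsPolytopeAdj rkQ j (Flag.map e c) (Flag.map e d) := by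
  refine ⟨(Flag.map e).injective.ne h.1, fun z hz => ?_⟩
  rw [mem_flag_map_iff, mem_flag_map_iff]
  exact h.2 _ (he z ▸ hz)

end IsPolytopeAdj

/-- A flag-connected pre-polytope of rank `n`: the axioms of an abstract polytope, with strong
flag-connectedness weakened to connectedness of the flag graph of the whole poset. -/
structure IsFlagConnectedPrepolytope {P : Type*} [PartialOrder P] (n : ℤ) (rk : P → ℤ) :
    Prop where
  strictMono : StrictMono rk
  range_eq : Set.range rk = Set.Icc (-1 : ℤ) n
  exists_isBot : ∃ B : P, IsBot B
  exists_isTop : ∃ T : P, IsTop T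
  diamond : ∀ F G : P, F < G → rk G = rk F + 2 →
    ∃ H₁ H₂ : P, H₁ ≠ H₂ ∧ ∀ H : P, (F < H ∧ H < G) ↔ (H = H₁ ∨ H = H₂)
  flag_connected : ∀ c d : Flag P,
    Relation.ReflTransGen (fun c' d' => ∃ j : ℤ, IsPolytopeAdj rk j c' d') c d

lemma IsAbstractPolytope.flag_connected {P : Type*} [PartialOrder P] {n : ℤ} {rk : P → ℤ}
    (hP : IsAbstractPolytope n rk) (c d : Flag P) :
    Relation.ReflTransGen (fun c' d' => ∃ j : ℤ, IsPolytopeAdj rk j c' d') c d := by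
  obtain ⟨B, hB⟩ := hP.exists_bot
  obtain ⟨T, hT⟩ := hP.exists_top
  have hBT : Set.Icc B T = Set.univ := Set.eq_univ_of_forall fun z => ⟨hB z, hT z⟩
  let e : Set.Icc B T ≃o P := (OrderIso.setCongr _ _ hBT).trans OrderIso.Set.univ
  have h := (hP.strongly_connected B T (hB T) ((Flag.map e).symm c) ((Flag.map e).symm d)).lift
    (p := fun c' d' => ∃ j : ℤ, IsPolytopeAdj rk j c' d') (Flag.map e)
    fun _ _ ⟨j, hj⟩ => ⟨j, hj.map e fun _ => rfl⟩
  simpa only [Function.onFun, Equiv.apply_symm_apply] using h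

lemma IsAbstractPolytope.isFlagConnectedPrepolytope {P : Type*} [PartialOrder P] {n : ℤ}
    {rk : P → ℤ} (hP : IsAbstractPolytope n rk) : IsFlagConnectedPrepolytope n rk where
  strictMono _ _ h := hP.strictMono h
  range_eq := hP.rank_range
  exists_isBot := hP.exists_bot
  exists_isTop := hP.exists_top
  diamond := hP.diamond
  flag_connected := hP.flag_connected

namespace IsFlagConnectedPrepolytope

variable {P : Type*} [PartialOrder P] {rk : P → ℤ}

section Rank

variable {n : ℤ}

lemma rank_mem_Icc (hP : IsFlagConnectedPrepolytope n rk) (x : P) :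
    rk x ∈ Set.Icc (-1 : ℤ) n :=
  hP.range_eq ▸ Set.mem_range_self x

lemma exists_mem_rank_eq (hP : IsFlagConnectedPrepolytope n rk) (c : Flag P) {k : ℤ}
    (hk : k ∈ Set.Icc (-1 : ℤ) n) : ∃ z ∈ c, rk z = k := by
  obtain ⟨x, rfl⟩ := hP.range_eq.symm ▸ hk
  obtain ⟨d, hd⟩ := Flag.exists_mem x
  induction hP.flag_connected d c with
  | refl => exact ⟨x, hd, rfl⟩
  | tail _ h ih =>
    obtain ⟨j, hj⟩ := h
    exact (hj.exists_mem_rank_eq_iff _).1 ih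

lemma exists_lt_rank_eq (hP : IsFlagConnectedPrepolytope n rk) {x : P} {k : ℤ} (hk : -1 ≤ k)
    (hkx : k < rk x) : ∃ y < x, rk y = k := by
  obtain ⟨c, hx⟩ := Flag.exists_mem x
  obtain ⟨y, hy, rfl⟩ := hP.exists_mem_rank_eq c ⟨hk, hkx.le.trans (hP.rank_mem_Icc x).2⟩
  exact ⟨y, lt_of_apply_lt_of_mem_flag hP.strictMono hy hx hkx, rfl⟩

lemma rank_le_rank_apply (hP : IsFlagConnectedPrepolytope n rk) {f : P → P} (hf : StrictMono f)
    (x : P) : rk x ≤ rk (f x) := by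
  suffices key : ∀ k : ℤ, -1 ≤ k → ∀ y, rk y = k → k ≤ rk (f y) from
    key _ (hP.rank_mem_Icc x).1 x rfl
  intro k hk
  induction k, hk using Int.leInduction with
  | base => exact fun y _ => (hP.rank_mem_Icc (f y)).1
  | succ k hk ih =>
    intro y hy
    obtain ⟨z, hzy, hz⟩ := hP.exists_lt_rank_eq hk (by omega : k < rk y)
    exact (ih z hz).trans_lt (hP.strictMono (hf hzy))

lemma rank_apply (hP : IsFlagConnectedPrepolytope n rk) (e : P ≃o P) (x : P) :
    rk (e x) = rk x := by
  refine le_antisymm ?_ (hP.rank_le_rank_apply e.strictMono x)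
  simpa using hP.rank_le_rank_apply e.symm.strictMono (e x)

end Rank

section Adjacency

variable {n j : ℤ} {c d d' : Flag P}

lemma rank_mem_Ico_of_adj (hP : IsFlagConnectedPrepolytope n rk) (h : IsPolytopeAdj rk j c d) :
    j ∈ Set.Ico 0 n := by
  obtain ⟨B, hB⟩ := hP.exists_isBot
  obtain ⟨T, hT⟩ := hP.exists_isTop
  obtain ⟨x, hx, rfl⟩ := h.exists_mem_rank_eq
  have hxd : x ∉ d := h.notMem_of_rank_eq hP.strictMono hx rfl
  have hBd : B ∈ d := Flag.mem_iff_forall_le_or_ge.2 fun b _ => Or.inl (hB b)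
  have hTd : T ∈ d := Flag.mem_iff_forall_le_or_ge.2 fun b _ => Or.inr (hT b)
  have hBx : rk B < rk x := hP.strictMono <| (hB x).lt_of_ne fun e => hxd (e ▸ hBd)
  have hxT : rk x < rk T := hP.strictMono <| (hT x).lt_of_ne fun e => hxd (e ▸ hTd)
  exact ⟨Int.add_one_le_of_lt ((hP.rank_mem_Icc B).1.trans_lt hBx),
    hxT.trans_le (hP.rank_mem_Icc T).2⟩

/-- Assuming only agreement off rank `j` makes this apply both to `c` itself and to the flags
`j`-adjacent to it. -/
lemma exists_forall_mem_eq_or_eq (hP : IsFlagConnectedPrepolytope n rk) (hj : j ∈ Set.Ico 0 n)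
    (c : Flag P) :
    ∃ H₁ H₂ : P, ∀ d : Flag P, (∀ z, rk z ≠ j → (z ∈ c ↔ z ∈ d)) →
      ∀ y ∈ d, rk y = j → y = H₁ ∨ y = H₂ := by
  obtain ⟨hj₀, hjn⟩ := hj
  obtain ⟨F, hF, hFj⟩ := hP.exists_mem_rank_eq c (k := j - 1) ⟨by omega, by omega⟩
  obtain ⟨G, hG, hGj⟩ := hP.exists_mem_rank_eq c (k := j + 1) ⟨by omega, by omega⟩
  have hFG : F < G := lt_of_apply_lt_of_mem_flag hP.strictMono hF hG (by omega)
  obtain ⟨H₁, H₂, -, hH⟩ := hP.diamond F G hFG (by omega)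
  refine ⟨H₁, H₂, fun d hd y hy hyj => (hH y).1 ⟨?_, ?_⟩⟩
  · exact lt_of_apply_lt_of_mem_flag hP.strictMono ((hd F (by omega)).1 hF) hy (by omega)
  · exact lt_of_apply_lt_of_mem_flag hP.strictMono hy ((hd G (by omega)).1 hG) (by omega)

lemma adj_unique (hP : IsFlagConnectedPrepolytope n rk) (h : IsPolytopeAdj rk j c d)
    (h' : IsPolytopeAdj rk j c d') : d = d' := by
  obtain ⟨H₁, H₂, hH⟩ := hP.exists_forall_mem_eq_or_eq (hP.rank_mem_Ico_of_adj h) c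
  obtain ⟨x, hx, hxj⟩ := h.exists_mem_rank_eq
  obtain ⟨y, hy, hyj⟩ := h'.symm.exists_mem_rank_eq
  refine flag_eq_of_le fun z hz => ?_
  by_cases hzj : rk z = j
  · have hzx : z ≠ x := fun e => h.notMem_of_rank_eq hP.strictMono hx hxj (e ▸ hz)
    have hyx : y ≠ x := fun e => h'.notMem_of_rank_eq hP.strictMono hx hxj (e ▸ hy)
    have hx₁₂ : x = H₁ ∨ x = H₂ := hH c (fun _ _ => Iff.rfl) x hx hxj
    have hy₁₂ : y = H₁ ∨ y = H₂ := hH d' h'.2 y hy hyj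
    have hz₁₂ : z = H₁ ∨ z = H₂ := hH d h.2 z hz hzj
    have hzy : z = y := by grind
    exact hzy ▸ hy
  · exact (h'.2 z hzj).1 ((h.2 z hzj).2 hz)

end Adjacency

section Automorphisms

variable {n j : ℤ} {c d : Flag P}

lemma adj_smul (hP : IsFlagConnectedPrepolytope n rk) (e : P ≃o P)
    (h : IsPolytopeAdj rk j c d) : IsPolytopeAdj rk j (e • c) (e • d) :=
  h.map e (hP.rank_apply e.symm)

lemma smul_eq_of_smul_eq (hP : IsFlagConnectedPrepolytope n rk) {e : P ≃o P} (h : e • c = c)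
    (d : Flag P) : e • d = d := by
  induction hP.flag_connected c d with
  | refl => exact h
  | tail _ hadj ih =>
    obtain ⟨j, hj⟩ := hadj
    exact hP.adj_unique (ih ▸ hP.adj_smul e hj) hj

lemma eq_one_of_smul_eq (hP : IsFlagConnectedPrepolytope n rk) {e : P ≃o P} (h : e • c = c) :
    e = 1 := by
  refine RelIso.ext fun x => ?_
  obtain ⟨d, hd⟩ := Flag.exists_mem x
  have hex : e x ∈ e • d := Set.mem_image_of_mem e hd
  rw [hP.smul_eq_of_smul_eq h d] at hex
  exact eq_of_apply_eq_of_mem_flag hP.strictMono hex hd (hP.rank_apply e x)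

lemma smul_left_injective (hP : IsFlagConnectedPrepolytope n rk) (c : Flag P) :
    Function.Injective fun e : P ≃o P => e • c := fun a b hab =>
  (inv_mul_eq_one.1 <| hP.eq_one_of_smul_eq (c := c) <| by
    rw [mul_smul, inv_smul_eq_iff]
    exact hab).symm

lemma smul_left_bijective (hP : IsFlagConnectedPrepolytope n rk)
    (hreg : IsRegularPolytope (P := P)) (c : Flag P) :
    Function.Bijective fun e : P ≃o P => e • c :=
  ⟨hP.smul_left_injective c, fun d => (hreg c d).imp fun _ he => Flag.ext he⟩

end Automorphisms

section Monodromy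

lemma mem_actionCentralizer_of_forall_adj {n j : ℤ} (hP : IsFlagConnectedPrepolytope n rk)
    {f : Equiv.Perm (Flag P)} (hf : ∀ c, IsPolytopeAdj rk j c (f c)) :
    f ∈ actionCentralizer (P ≃o P) (Flag P) :=
  mem_actionCentralizer_iff.2 fun e c =>
    hP.adj_unique (hf (e • c)) (hP.adj_smul e (hf c))

lemma inv_eq_self_of_forall_adj {n j : ℤ} (hP : IsFlagConnectedPrepolytope n rk)
    {f : Equiv.Perm (Flag P)} (hf : ∀ c, IsPolytopeAdj rk j c (f c)) : f⁻¹ = f :=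
  inv_eq_of_mul_eq_one_left <| Equiv.ext fun c => hP.adj_unique (hf (f c)) (hf c).symm

lemma exists_mem_closure_apply_eq {n : ℕ} (hP : IsFlagConnectedPrepolytope (n : ℤ) rk)
    {g : Fin n → Equiv.Perm (Flag P)}
    (hg : ∀ (j : Fin n) (c : Flag P), IsPolytopeAdj rk (j : ℤ) c (g j c)) (c d : Flag P) :
    ∃ w ∈ Subgroup.closure (Set.range g), w c = d := by
  induction hP.flag_connected c d with
  | refl => exact ⟨1, one_mem _, rfl⟩
  | tail _ hadj ih =>
    obtain ⟨w, hw, rfl⟩ := ih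
    obtain ⟨j, hj⟩ := hadj
    obtain ⟨hj₀, hjn⟩ := hP.rank_mem_Ico_of_adj hj
    lift j to ℕ using hj₀
    let i : Fin n := ⟨j, Int.ofNat_lt.1 hjn⟩
    exact ⟨g i * w, mul_mem (Subgroup.subset_closure ⟨i, rfl⟩) hw, hP.adj_unique (hg i _) hj⟩

lemma closure_eq_actionCentralizer {n : ℕ} (hP : IsFlagConnectedPrepolytope (n : ℤ) rk)
    (hreg : IsRegularPolytope (P := P)) {g : Fin n → Equiv.Perm (Flag P)}
    (hg : ∀ (j : Fin n) (c : Flag P), IsPolytopeAdj rk (j : ℤ) c (g j c)) :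
    Subgroup.closure (Set.range g) = actionCentralizer (P ≃o P) (Flag P) := by
  obtain ⟨c⟩ : Nonempty (Flag P) := inferInstance
  refine eq_actionCentralizer_of_le (hP.smul_left_bijective hreg c).surjective
    ((Subgroup.closure_le _).2 ?_) (hP.exists_mem_closure_apply_eq hg c)
  rintro _ ⟨j, rfl⟩
  exact hP.mem_actionCentralizer_of_forall_adj (hg j)

end Monodromy

end IsFlagConnectedPrepolytope

theorem aut_iso_monodromy_of_regular_general {n : ℕ} {P : Type*} [PartialOrder P]
    (rk : P → ℤ) (hP : IsFlagConnectedPrepolytope (n : ℤ) rk)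
    (hreg : IsRegularPolytope (P := P))
    (Φ : Flag P) (ρ : Fin n → (P ≃o P))
    (hρ : ∀ j : Fin n, ∃ Ψ : Flag P,
      (↑Ψ : Set P) = (ρ j) '' (↑Φ : Set P) ∧ IsPolytopeAdj rk (j : ℤ) Φ Ψ)
    (g : Fin n → Equiv.Perm (Flag P))
    (hg : ∀ (j : Fin n) (Λ : Flag P), IsPolytopeAdj rk (j : ℤ) Λ (g j Λ)) :
    ∃ φ : (P ≃o P) →* Equiv.Perm (Flag P),
      Function.Injective φ ∧ φ.range = Subgroup.closure (Set.range g) ∧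
      ∀ j : Fin n, φ (ρ j) = g j := by
  have hΦ : Function.Bijective fun e : P ≃o P => e • Φ := hP.smul_left_bijective hreg Φ
  refine ⟨rightTranslationHom hΦ, rightTranslationHom_injective hΦ, ?_, fun j => ?_⟩
  · rw [range_rightTranslationHom, hP.closure_eq_actionCentralizer hreg hg]
  · obtain ⟨Ψ, hΨ, hadj⟩ := hρ j
    have hρΦ : ρ j • Φ = g j Φ := (Flag.ext hΨ.symm).trans (hP.adj_unique hadj (hg j Φ))
    rw [rightTranslationHom_eq_inv hΦ (hP.mem_actionCentralizer_of_forall_adj (hg j)) hρΦ,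
      hP.inv_eq_self_of_forall_adj (hg j)]

/-- **For a regular `n`-polytope `R`, the automorphism group `Γ(R)` is isomorphic
to the monodromy group `Mon(R)`, via an isomorphism sending each distinguished
generator `ρ_j` (the automorphism mapping the base flag `Φ` to `Φ^j`) to the
monodromy generator `g_j`.**  The isomorphism is expressed as an injective
homomorphism from the full automorphism group `P ≃o P` into the symmetric group
on the flags, with range exactly `Mon(R) = ⟨g_0, ..., g_{n-1}⟩`. -/
theorem aut_iso_monodromy_of_regular {n : ℕ} {P : Type} [PartialOrder P]
    (rk : P → ℤ) (hP : IsAbstractPolytope (n : ℤ) rk)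
    (hreg : IsRegularPolytope (P := P))
    (Φ : Flag P) (ρ : Fin n → (P ≃o P))
    (hρ : ∀ j : Fin n, ∃ Ψ : Flag P,
      (↑Ψ : Set P) = (ρ j) '' (↑Φ : Set P) ∧ IsPolytopeAdj rk (j : ℤ) Φ Ψ)
    (g : Fin n → Equiv.Perm (Flag P))
    (hg : ∀ (j : Fin n) (Λ : Flag P), IsPolytopeAdj rk (j : ℤ) Λ (g j Λ)) :
    ∃ φ : (P ≃o P) →* Equiv.Perm (Flag P),
      Function.Injective φ ∧ φ.range = Subgroup.closure (Set.range g) ∧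
      ∀ j : Fin n, φ (ρ j) = g j :=
  aut_iso_monodromy_of_regular_general rk hP.isFlagConnectedPrepolytope hreg Φ ρ hρ g hg
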